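/- arXiv:1905.11111 — 6 statements merged into one kernel-verified Lean document; each statement's English description precedes it below -/
import Mathlib

section
/- For every positive rational number α, the skew-symmetric bilinear bracket on the 8-dimensional real vector space with basis e₁,…,e₈ defined by [e₁,e₂] = −e₅, [e₁,e₅] = −e₆, [e₂,e₄] = −(1−α)e₆, [e₁,e₄] = (1+α)e₇, [e₂,e₃] = e₇, [e₂,e₅] = −(1+α)e₇, [e₁,e₆] = −e₈, [e₂,e₇] = −e₈, [e₃,e₄] = −e₈, [e₄,e₅] = 2e₈ (all other brackets of basis vectors zero, up to antisymmetry) satisfies the Jacobi identity, so it defines an 8-dimensional real Lie algebra 𝔤_α; moreover 𝔤_α is nilpotent, and the successive terms of its lower central series 𝔤_α ⊇ [𝔤_α,𝔤_α] ⊇ [𝔤_α,[𝔤_α,𝔤_α]] ⊇ … have dimensions 8, 4, 3, 1, 0. -/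
/-!
In coordinates the bracket is an explicit vector of quadratic polynomials (`gBr_eq`), whose
first four entries vanish, so skew-symmetry, the values on the basis and the Jacobi identity are
polynomial identities checked entry by entry.

Every term of the lower central series is a coordinate subspace `coordSpan s`, the span of the
`e i` with `i ∈ s`: the successive index sets are `{4, 5, 6, 7}`, `{5, 6, 7}`, `{7}` and `∅`. One
inclusion is read off the coordinate formula; the other exhibits each `e i` as a bracket
(`lcs_succ_eq`). Positivity of `α` enters only through `1 + α ≠ 0`, which makes `e 6` a multiple
of `[e 1, e 4]` and so keeps it in the second term. Dimensions are then cardinalities.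
-/

noncomputable section

/-- Structure constants of the Lie algebra `g_alpha` (0-indexed basis `e 0, ..., e 7`
corresponding to `e_1, ..., e_8` in the paper): `gA alpha i j` is the value of the bracket
`[e_i, e_j]` for the listed pairs with `i < j`, and `0` otherwise. -/
def gA (a : ℝ) (i j : Fin 8) : Fin 8 → ℝ :=
  if i = 0 ∧ j = 1 then -(Pi.single 4 1 : Fin 8 → ℝ)
  else if i = 0 ∧ j = 4 then -(Pi.single 5 1 : Fin 8 → ℝ)
  else if i = 1 ∧ j = 3 then (a - 1) • (Pi.single 5 1 : Fin 8 → ℝ)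
  else if i = 0 ∧ j = 3 then (1 + a) • (Pi.single 6 1 : Fin 8 → ℝ)
  else if i = 1 ∧ j = 2 then (Pi.single 6 1 : Fin 8 → ℝ)
  else if i = 1 ∧ j = 4 then -((1 + a) • (Pi.single 6 1 : Fin 8 → ℝ))
  else if i = 0 ∧ j = 5 then -(Pi.single 7 1 : Fin 8 → ℝ)
  else if i = 1 ∧ j = 6 then -(Pi.single 7 1 : Fin 8 → ℝ)
  else if i = 2 ∧ j = 3 then -(Pi.single 7 1 : Fin 8 → ℝ)
  else if i = 3 ∧ j = 4 then (2 : ℝ) • (Pi.single 7 1 : Fin 8 → ℝ)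
  else 0

/-- The skew-symmetric bilinear bracket of `g_alpha`, extended bilinearly from the
structure constants. -/
def gBr (a : ℝ) (x y : Fin 8 → ℝ) : Fin 8 → ℝ :=
  ∑ i : Fin 8, ∑ j : Fin 8, (x i * y j) • (gA a i j - gA a j i)

/-- The distinguished basis vectors `e i = e_{i+1}`. -/
def e (i : Fin 8) : Fin 8 → ℝ := Pi.single i 1

/-- The lower central series of `g_alpha`. -/
def lcs (a : ℝ) : ℕ → Submodule ℝ (Fin 8 → ℝ)
  | 0 => ⊤
  | k + 1 => Submodule.span ℝ {z : Fin 8 → ℝ | ∃ x : Fin 8 → ℝ, ∃ y ∈ lcs a k, z = gBr a x y}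

/-- The bracket written out in coordinates. -/
theorem gBr_eq (a : ℝ) (x y : Fin 8 → ℝ) :
    gBr a x y = ![0, 0, 0, 0,
      -(x 0 * y 1 - x 1 * y 0),
      -(x 0 * y 4 - x 4 * y 0) + (a - 1) * (x 1 * y 3 - x 3 * y 1),
      (1 + a) * (x 0 * y 3 - x 3 * y 0) + (x 1 * y 2 - x 2 * y 1)
        - (1 + a) * (x 1 * y 4 - x 4 * y 1),
      -(x 0 * y 5 - x 5 * y 0) - (x 1 * y 6 - x 6 * y 1) - (x 2 * y 3 - x 3 * y 2)
        + 2 * (x 3 * y 4 - x 4 * y 3)] := by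
  funext k
  fin_cases k <;>
    simp [gBr, gA, Fin.sum_univ_eight] <;> ring

/-- The coordinate subspace spanned by the `e i` with `i ∈ s`. -/
def coordSpan (s : Finset (Fin 8)) : Submodule ℝ (Fin 8 → ℝ) :=
  Submodule.span ℝ (e '' (s : Set (Fin 8)))

theorem mem_coordSpan {s : Finset (Fin 8)} {x : Fin 8 → ℝ} :
    x ∈ coordSpan s ↔ ∀ i, i ∉ s → x i = 0 := by
  constructor
  · intro hx i hi
    have hle : coordSpan s ≤ LinearMap.ker (LinearMap.proj (R := ℝ) (φ := fun _ => ℝ) i) := by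
      refine Submodule.span_le.2 ?_
      rintro _ ⟨j, hj, rfl⟩
      have hij : i ≠ j := by
        rintro rfl
        exact hi hj
      simp [e, hij]
    simpa using hle hx
  · intro h
    have hx : x = ∑ i, x i • e i := by
      funext k
      simp [e, Finset.sum_apply, Pi.single_apply]
    rw [hx]
    refine Submodule.sum_mem _ fun i _ => ?_
    by_cases hi : i ∈ s
    · exact Submodule.smul_mem _ _ (Submodule.subset_span ⟨i, hi, rfl⟩)
    · simp [h i hi]

theorem finrank_coordSpan (s : Finset (Fin 8)) : Module.finrank ℝ (coordSpan s) = s.card := by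
  have hli : LinearIndependent ℝ (fun i : s => e i) := by
    have h := (Pi.basisFun ℝ (Fin 8)).linearIndependent.comp
      (fun i : s => (i : Fin 8)) Subtype.val_injective
    convert h using 1
    funext i
    simp [e]
  have h := finrank_span_eq_card hli
  have hr : Set.range (fun i : s => e i) = e '' (s : Set (Fin 8)) := by
    ext z
    simp
  rw [hr] at h
  rw [Fintype.card_coe] at h
  exact h

/-- Criterion for the next term of the lower central series: if the current term is
`coordSpan s`, brackets with it have no entries outside `t`, and each `e i` with `i ∈ t` is such a
bracket, then the next term is `coordSpan t`. -/
theorem lcs_succ_eq {a : ℝ} {k : ℕ} {s t : Finset (Fin 8)} (hk : lcs a k = coordSpan s)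
    (hle : ∀ x y : Fin 8 → ℝ, (∀ i, i ∉ s → y i = 0) → ∀ i, i ∉ t → gBr a x y i = 0)
    (hge : ∀ i ∈ t, ∃ x y : Fin 8 → ℝ, (∀ j, j ∉ s → y j = 0) ∧ e i = gBr a x y) :
    lcs a (k + 1) = coordSpan t := by
  apply le_antisymm
  · refine Submodule.span_le.2 ?_
    rintro _ ⟨x, y, hy, rfl⟩
    rw [hk, mem_coordSpan] at hy
    exact mem_coordSpan.2 (hle x y hy)
  · refine Submodule.span_le.2 ?_
    rintro _ ⟨i, hi, rfl⟩
    obtain ⟨x, y, hy, h⟩ := hge i hi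
    exact Submodule.subset_span ⟨x, y, by rw [hk]; exact mem_coordSpan.2 hy, h⟩

theorem lcs_zero_eq (a : ℝ) : lcs a 0 = coordSpan Finset.univ := by
  ext x
  simp [lcs, mem_coordSpan]

theorem e_four_eq (a : ℝ) : e 4 = gBr a (e 0) (-e 1) := by
  rw [gBr_eq]; funext k; fin_cases k <;> simp [e]

theorem e_five_eq (a : ℝ) : e 5 = gBr a (e 0) (-e 4) := by
  rw [gBr_eq]; funext k; fin_cases k <;> simp [e]

theorem e_six_eq {a : ℝ} (ha : 1 + a ≠ 0) : e 6 = gBr a (e 1) (-(1 + a)⁻¹ • e 4) := by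
  rw [gBr_eq]; funext k; fin_cases k <;> simp [e, ha]

theorem e_seven_eq (a : ℝ) : e 7 = gBr a (e 0) (-e 5) := by
  rw [gBr_eq]; funext k; fin_cases k <;> simp [e]

theorem lcs_one_eq {a : ℝ} (ha : 1 + a ≠ 0) : lcs a 1 = coordSpan {4, 5, 6, 7} := by
  refine lcs_succ_eq (lcs_zero_eq a) ?_ ?_
  · intro x y _ i hi
    rw [gBr_eq]
    fin_cases i <;> simp at hi ⊢
  · intro i hi
    simp only [Finset.mem_insert, Finset.mem_singleton] at hi
    rcases hi with rfl | rfl | rfl | rfl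
    · exact ⟨_, _, by simp, e_four_eq a⟩
    · exact ⟨_, _, by simp, e_five_eq a⟩
    · exact ⟨_, _, by simp, e_six_eq ha⟩
    · exact ⟨_, _, by simp, e_seven_eq a⟩

theorem lcs_two_eq {a : ℝ} (ha : 1 + a ≠ 0) : lcs a 2 = coordSpan {5, 6, 7} := by
  refine lcs_succ_eq (lcs_one_eq ha) ?_ ?_
  · intro x y hy i hi
    have h0 := hy 0 (by decide)
    have h1 := hy 1 (by decide)
    rw [gBr_eq]
    fin_cases i <;> simp [h0, h1] at hi ⊢
  · intro i hi
    simp only [Finset.mem_insert, Finset.mem_singleton] at hi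
    rcases hi with rfl | rfl | rfl
    · exact ⟨_, _, fun j hj => by fin_cases j <;> simp [e] at hj ⊢, e_five_eq a⟩
    · exact ⟨_, _, fun j hj => by fin_cases j <;> simp [e] at hj ⊢, e_six_eq ha⟩
    · exact ⟨_, _, fun j hj => by fin_cases j <;> simp [e] at hj ⊢, e_seven_eq a⟩

theorem lcs_three_eq {a : ℝ} (ha : 1 + a ≠ 0) : lcs a 3 = coordSpan {7} := by
  refine lcs_succ_eq (lcs_two_eq ha) ?_ ?_
  · intro x y hy i hi
    have h0 := hy 0 (by decide)
    have h1 := hy 1 (by decide)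
    have h2 := hy 2 (by decide)
    have h3 := hy 3 (by decide)
    have h4 := hy 4 (by decide)
    rw [gBr_eq]
    fin_cases i <;> simp [h0, h1, h2, h3, h4] at hi ⊢
  · intro i hi
    obtain rfl := Finset.mem_singleton.1 hi
    exact ⟨_, _, fun j hj => by fin_cases j <;> simp [e] at hj ⊢, e_seven_eq a⟩

theorem lcs_four_eq {a : ℝ} (ha : 1 + a ≠ 0) : lcs a 4 = coordSpan ∅ := by
  refine lcs_succ_eq (lcs_three_eq ha) ?_ (by simp)
  intro x y hy i _
  have h0 := hy 0 (by decide)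
  have h1 := hy 1 (by decide)
  have h2 := hy 2 (by decide)
  have h3 := hy 3 (by decide)
  have h4 := hy 4 (by decide)
  have h5 := hy 5 (by decide)
  have h6 := hy 6 (by decide)
  rw [gBr_eq]
  fin_cases i <;> simp [h0, h1, h2, h3, h4, h5, h6]

/-- the bracket of `g_alpha` is skew-symmetric, has the prescribed values on
the basis, satisfies the Jacobi identity (so it defines an 8-dimensional real Lie algebra),
and `g_alpha` is nilpotent with lower central series of dimensions 8, 4, 3, 1, 0. -/
theorem statement0 (α : ℚ) (hα : 0 < α) :
    (∀ x y : Fin 8 → ℝ, gBr (α : ℝ) x y = -gBr (α : ℝ) y x) ∧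
    gBr (α : ℝ) (e 0) (e 1) = -e 4 ∧
    gBr (α : ℝ) (e 0) (e 4) = -e 5 ∧
    gBr (α : ℝ) (e 1) (e 3) = -((1 - (α : ℝ)) • e 5) ∧
    gBr (α : ℝ) (e 0) (e 3) = (1 + (α : ℝ)) • e 6 ∧
    gBr (α : ℝ) (e 1) (e 2) = e 6 ∧
    gBr (α : ℝ) (e 1) (e 4) = -((1 + (α : ℝ)) • e 6) ∧
    gBr (α : ℝ) (e 0) (e 5) = -e 7 ∧
    gBr (α : ℝ) (e 1) (e 6) = -e 7 ∧
    gBr (α : ℝ) (e 2) (e 3) = -e 7 ∧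
    gBr (α : ℝ) (e 3) (e 4) = (2 : ℝ) • e 7 ∧
    (∀ x y z : Fin 8 → ℝ,
      gBr (α : ℝ) (gBr (α : ℝ) x y) z + gBr (α : ℝ) (gBr (α : ℝ) y z) x +
        gBr (α : ℝ) (gBr (α : ℝ) z x) y = 0) ∧
    lcs (α : ℝ) 4 = ⊥ ∧
    Module.finrank ℝ (lcs (α : ℝ) 0) = 8 ∧
    Module.finrank ℝ (lcs (α : ℝ) 1) = 4 ∧
    Module.finrank ℝ (lcs (α : ℝ) 2) = 3 ∧
    Module.finrank ℝ (lcs (α : ℝ) 3) = 1 ∧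
    Module.finrank ℝ (lcs (α : ℝ) 4) = 0 := by
  have hpos : (0 : ℝ) < (α : ℝ) := by exact_mod_cast hα
  have ha : 1 + (α : ℝ) ≠ 0 := by positivity
  refine ⟨?_, ?_, ?_, ?_, ?_, ?_, ?_, ?_, ?_, ?_, ?_, ?_, ?_, ?_, ?_, ?_, ?_, ?_⟩
  · intro x y
    rw [gBr_eq, gBr_eq]
    funext k
    fin_cases k <;> simp <;> ring
  iterate 10
    · rw [gBr_eq]
      funext k
      fin_cases k <;> simp [e]
  · intro x y z
    simp only [gBr_eq]
    funext k
    fin_cases k <;> simp <;> ring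
  · rw [lcs_four_eq ha]
    simp [coordSpan]
  · rw [lcs_zero_eq, finrank_coordSpan]
    rfl
  · rw [lcs_one_eq ha, finrank_coordSpan]
    rfl
  · rw [lcs_two_eq ha, finrank_coordSpan]
    rfl
  · rw [lcs_three_eq ha, finrank_coordSpan]
    rfl
  · rw [lcs_four_eq ha, finrank_coordSpan]
    rfl
end
end

section
/- For every positive rational number α, the derived subalgebra [𝔤_α, 𝔤_α] equals the subspace spanned by e₅, e₆, e₇, e₈; consequently the space of linear functionals φ on 𝔤_α satisfying φ([x,y]) = 0 for all x, y ∈ 𝔤_α has dimension 4 (i.e. the first Chevalley–Eilenberg cohomology group of 𝔤_α has dimension 4). -/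
/-!
The structure constants take values in `span {e 4, e 5, e 6, e 7}`, so all brackets do. Conversely
`e 4, e 5, e 6, e 7` are, up to sign, the brackets `[e 0, e 1]`, `[e 0, e 4]`, `[e 1, e 2]` and
`[e 0, e 5]`, whose coefficients do not involve `α`. A functional vanishes on all brackets exactly
when it lies in the annihilator of their span, which has dimension `8 - 4 = 4`.
-/

noncomputable section

/-- The space of linear functionals on `g_alpha` vanishing on all brackets
(the first Chevalley–Eilenberg cohomology group of `g_alpha`). -/
def annBr (a : ℝ) : Submodule ℝ (Module.Dual ℝ (Fin 8 → ℝ)) where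
  carrier := {φ | ∀ x y : Fin 8 → ℝ, φ (gBr a x y) = 0}
  add_mem' := by
    intro φ ψ hφ hψ
    simp only [Set.mem_setOf_eq] at *
    intro x y
    simp [hφ x y, hψ x y]
  zero_mem' := by
    simp only [Set.mem_setOf_eq]
    intro x y
    simp
  smul_mem' := by
    intro c φ hφ
    simp only [Set.mem_setOf_eq] at *
    intro x y
    simp [hφ x y]

lemma gA_mem (a : ℝ) (i j : Fin 8) : gA a i j ∈ Submodule.span ℝ {e 4, e 5, e 6, e 7} := by
  have h4 : (Pi.single 4 1 : Fin 8 → ℝ) ∈ Submodule.span ℝ {e 4, e 5, e 6, e 7} :=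
    Submodule.subset_span (by simp [e])
  have h5 : (Pi.single 5 1 : Fin 8 → ℝ) ∈ Submodule.span ℝ {e 4, e 5, e 6, e 7} :=
    Submodule.subset_span (by simp [e])
  have h6 : (Pi.single 6 1 : Fin 8 → ℝ) ∈ Submodule.span ℝ {e 4, e 5, e 6, e 7} :=
    Submodule.subset_span (by simp [e])
  have h7 : (Pi.single 7 1 : Fin 8 → ℝ) ∈ Submodule.span ℝ {e 4, e 5, e 6, e 7} :=
    Submodule.subset_span (by simp [e])
  unfold gA
  split_ifs <;>
    first
    | assumption
    | exact Submodule.zero_mem _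
    | exact Submodule.neg_mem _ (by assumption)
    | exact Submodule.smul_mem _ _ (by assumption)
    | exact Submodule.neg_mem _ (Submodule.smul_mem _ _ (by assumption))

lemma gBr_e (a : ℝ) (i j : Fin 8) : gBr a (e i) (e j) = gA a i j - gA a j i := by
  unfold gBr e
  rw [Finset.sum_eq_single i, Finset.sum_eq_single j]
  · simp
  · intro k _ hk
    simp [hk]
  · simp
  · intro k _ hk
    simp [hk]
  · simp

lemma span_gBr (a : ℝ) :
    Submodule.span ℝ {z : Fin 8 → ℝ | ∃ x y : Fin 8 → ℝ, z = gBr a x y}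
      = Submodule.span ℝ {e 4, e 5, e 6, e 7} := by
  apply le_antisymm
  · rw [Submodule.span_le]
    rintro _ ⟨x, y, rfl⟩
    exact Submodule.sum_mem _ fun i _ => Submodule.sum_mem _ fun j _ =>
      Submodule.smul_mem _ _ (Submodule.sub_mem _ (gA_mem a i j) (gA_mem a j i))
  · rw [Submodule.span_le]
    rintro z (rfl | rfl | rfl | rfl)
    · exact Submodule.subset_span ⟨e 1, e 0, by rw [gBr_e]; simp [gA, e]⟩
    · exact Submodule.subset_span ⟨e 4, e 0, by rw [gBr_e]; simp [gA, e]⟩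
    · exact Submodule.subset_span ⟨e 1, e 2, by rw [gBr_e]; simp [gA, e]⟩
    · exact Submodule.subset_span ⟨e 5, e 0, by rw [gBr_e]; simp [gA, e]⟩

lemma annBr_eq (a : ℝ) :
    annBr a = (Submodule.span ℝ
      {z : Fin 8 → ℝ | ∃ x y : Fin 8 → ℝ, z = gBr a x y}).dualAnnihilator := by
  ext φ
  rw [Submodule.mem_dualAnnihilator]
  constructor
  · intro h z hz
    have hle : Submodule.span ℝ {z : Fin 8 → ℝ | ∃ x y : Fin 8 → ℝ, z = gBr a x y}
        ≤ LinearMap.ker φ := by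
      rw [Submodule.span_le]
      rintro _ ⟨x, y, rfl⟩
      exact h x y
    exact hle hz
  · intro h x y
    exact h _ (Submodule.subset_span ⟨x, y, rfl⟩)

lemma finrank_span_e :
    Module.finrank ℝ (Submodule.span ℝ ({e 4, e 5, e 6, e 7} : Set (Fin 8 → ℝ))) = 4 := by
  have hli : LinearIndependent ℝ (fun k : Fin 4 => e (Fin.natAdd 4 k)) := by
    have h := (Pi.basisFun ℝ (Fin 8)).linearIndependent.comp (Fin.natAdd 4 : Fin 4 → Fin 8)
      (Fin.natAdd_injective 4 4)
    convert h using 1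
    ext k
    simp [e]
  have hr : Set.range (fun k : Fin 4 => e (Fin.natAdd 4 k)) = {e 4, e 5, e 6, e 7} := by
    ext z
    simp only [Set.mem_range, Fin.exists_fin_succ, Set.mem_insert_iff, Set.mem_singleton_iff,
      eq_comm (a := z)]
    simp
  rw [← hr, finrank_span_eq_card hli, Fintype.card_fin]

/-- the derived subalgebra `[g_alpha, g_alpha]` is `span{e 4, e 5, e 6, e 7}`
(= span{e₅,e₆,e₇,e₈}), and the space of functionals vanishing on all brackets has
dimension 4. -/
theorem statement2 (α : ℚ) (hα : 0 < α) :
    Submodule.span ℝ {z : Fin 8 → ℝ | ∃ x y : Fin 8 → ℝ, z = gBr (α : ℝ) x y}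
      = Submodule.span ℝ {e 4, e 5, e 6, e 7} ∧
    Module.finrank ℝ (annBr (α : ℝ)) = 4 := by
  refine ⟨span_gBr _, ?_⟩
  have h := Subspace.finrank_add_finrank_dualAnnihilator_eq
    (Submodule.span ℝ ({e 4, e 5, e 6, e 7} : Set (Fin 8 → ℝ)))
  rw [finrank_span_e, Module.finrank_fin_fun] at h
  rw [annBr_eq, span_gBr]
  omega
end
end

section
/- Let α and α' be positive rational numbers. If the real Lie algebras 𝔤_α and 𝔤_{α'} are isomorphic, then α = α'. In particular, the family {𝔤_α}_{α ∈ ℚ⁺} consists of pairwise non-isomorphic 8-dimensional nilpotent real Lie algebras. -/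
/-!
Write `V = ⟨e₃, …, e₈⟩`. It is the centralizer of the third term `⟨e₆, e₇, e₈⟩` of the lower central
series, so an isomorphism `f : 𝔤_α → 𝔤_α'` maps `V` to `V` (`map_V`). It also maps the centralizer
of `V`, which modulo `⟨e₆, e₇, e₈⟩` is the line through `e₅ - 2e₃`, to the centralizer of `V`.
For `w ∈ V` the map `x ↦ [x, [x, w]]` is a quadratic form in `(x₁, x₂)` with values in `⟨e₈⟩`
(`gBr_gBr_self`). It depends only on `w` modulo `⟨e₆, e₇, e₈⟩`, and equals

* `x₁² + (1 + α) x₂²` for `w = e₅`, which spans the derived algebra modulo `⟨e₆, e₇, e₈⟩`;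
* `x₁² + (3 + α) x₂²` for `w = e₅ - 2e₃`.

Hence the linear map induced by `f` on `𝔤 / V ≅ ℝ²` carries each of these two forms for `α` to a
multiple of the corresponding form for `α'`. Simultaneous orthogonality for both forms makes this
linear map diagonal or antidiagonal. Comparing coefficients, positivity of `α` and `α'` excludes the
antidiagonal case, and the diagonal case gives `α = α'` (`eq_of_forms`).
-/

noncomputable section

/-- For `w ∈ ⟨e₃, …, e₈⟩` the double bracket `[x, [x, w]]` is a quadratic form in `(x₁, x₂)`
times `e₈`. -/
theorem gBr_gBr_self (a : ℝ) (x w : Fin 8 → ℝ) (h0 : w 0 = 0) (h1 : w 1 = 0) :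
    gBr a x (gBr a x w) =
      (w 4 * (x 0 ^ 2 + (1 + a) * x 1 ^ 2) - w 2 * x 1 ^ 2 - 2 * a * w 3 * (x 0 * x 1)) • e 7 := by
  ext k
  fin_cases k <;> simp [gBr_eq, e, h0, h1]
  ring

/-- An intrinsic description of `⟨e₃, …, e₈⟩`: the centralizer of the third term of the lower
central series. -/
theorem mem_V_iff (a : ℝ) (ha : 0 < a) (x : Fin 8 → ℝ) :
    (x 0 = 0 ∧ x 1 = 0) ↔ ∀ y z t, gBr a x (gBr a y (gBr a z t)) = 0 := by
  constructor
  · rintro ⟨h0, h1⟩ y z t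
    ext k
    fin_cases k <;> simp [gBr_eq, h0, h1]
  · intro h
    have h6 := congrFun (h (e 0) (e 0) (e 1)) 7
    have h7 := congrFun (h (e 1) (e 0) (e 1)) 7
    simp [gBr_eq, e] at h6 h7
    refine ⟨h6, h7.resolve_right (by positivity)⟩

theorem map_V {a b : ℝ} (ha : 0 < a) (hb : 0 < b) (f : (Fin 8 → ℝ) ≃ₗ[ℝ] (Fin 8 → ℝ))
    (hf : ∀ x y, f (gBr a x y) = gBr b (f x) (f y)) (x : Fin 8 → ℝ)
    (hx : x 0 = 0 ∧ x 1 = 0) : f x 0 = 0 ∧ f x 1 = 0 := by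
  rw [mem_V_iff b hb]
  intro y z t
  obtain ⟨y, rfl⟩ := f.surjective y
  obtain ⟨z, rfl⟩ := f.surjective z
  obtain ⟨t, rfl⟩ := f.surjective t
  rw [← hf, ← hf, ← hf, (mem_V_iff a ha x).1 hx, map_zero]

/-- If the linear map with columns `(p, q)` and `(s, t)` carries the forms `x² + c y²` and
`x² + (c + 2) y²` to multiples of `x² + u y²` and `x² + (u + 2) y²`, then `c = u`. The forms
are compared through their values at `(1, 0)`, `(0, 1)` and `(1, 1)`. -/
theorem eq_of_forms {c u d D r p q s t : ℝ} (hc : 0 < c) (hu : 0 < u) (hd : d ≠ 0)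
    (h1 : d = D * (p ^ 2 + u * q ^ 2)) (h2 : d * c = D * (s ^ 2 + u * t ^ 2))
    (h3 : d * (1 + c) = D * ((p + s) ^ 2 + u * (q + t) ^ 2))
    (k1 : d = r * (p ^ 2 + (u + 2) * q ^ 2)) (k2 : d * (c + 2) = r * (s ^ 2 + (u + 2) * t ^ 2))
    (k3 : d * (3 + c) = r * ((p + s) ^ 2 + (u + 2) * (q + t) ^ 2)) : c = u := by
  have hD : D ≠ 0 := by rintro rfl; simp at h1; exact hd h1
  have hr : r ≠ 0 := by rintro rfl; simp at k1; exact hd k1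
  -- the polar forms vanish at the images of the two basis vectors
  have o1 : p * s + u * (q * t) = 0 := by
    apply mul_left_cancel₀ hD; linear_combination (h1 + h2 - h3) / 2
  have o2 : p * s + (u + 2) * (q * t) = 0 := by
    apply mul_left_cancel₀ hr; linear_combination (k1 + k2 - k3) / 2
  have hqt : q * t = 0 := by linear_combination (o2 - o1) / 2
  have hps : p * s = 0 := by linear_combination o1 - u * hqt
  -- the factors `D` and `r` are eliminated by comparing the values at `(1, 0)` and `(0, 1)`
  have m1 : s ^ 2 + u * t ^ 2 = c * (p ^ 2 + u * q ^ 2) := by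
    apply mul_left_cancel₀ hD; linear_combination c * h1 - h2
  have m2 : s ^ 2 + (u + 2) * t ^ 2 = (c + 2) * (p ^ 2 + (u + 2) * q ^ 2) := by
    apply mul_left_cancel₀ hr; linear_combination (c + 2) * k1 - k2
  rcases mul_eq_zero.1 hps with rfl | rfl
  · have hq : q ≠ 0 := by rintro rfl; simp at h1; exact hd h1
    obtain rfl : t = 0 := (mul_eq_zero.1 hqt).resolve_left hq
    -- an antidiagonal map would give `c u = (c + 2) (u + 2)`
    have : 0 < q ^ 2 := by positivity
    nlinarith [mul_pos hc this, mul_pos hu this]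
  · rcases mul_eq_zero.1 hqt with rfl | rfl
    · have hp : p ≠ 0 := by rintro rfl; simp at h1; exact hd h1
      have m3 : t ^ 2 = p ^ 2 := by linear_combination (m2 - m1) / 2
      rw [m3] at m1
      apply mul_right_cancel₀ (pow_ne_zero 2 hp)
      linear_combination -m1
    · exfalso
      -- here `m1` forces `p = q = 0`
      have : p ^ 2 + u * q ^ 2 = 0 := by
        apply mul_left_cancel₀ hc.ne'; linear_combination -m1
      rw [this] at h1
      simp at h1
      exact hd h1

/-- if the real Lie algebras `g_alpha` and `g_alpha'` are isomorphic, then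
`α = α'`; hence the family consists of pairwise non-isomorphic Lie algebras. -/
theorem statement5 (α α' : ℚ) (hα : 0 < α) (hα' : 0 < α')
    (h : ∃ f : (Fin 8 → ℝ) ≃ₗ[ℝ] (Fin 8 → ℝ),
      ∀ x y : Fin 8 → ℝ, f (gBr (α : ℝ) x y) = gBr (α' : ℝ) (f x) (f y)) :
    α = α' := by
  obtain ⟨f, hf⟩ := h
  have ha : (0 : ℝ) < α := by exact_mod_cast hα
  have hb : (0 : ℝ) < α' := by exact_mod_cast hα'
  generalize hga : (α : ℝ) = a at *
  generalize hgb : (α' : ℝ) = b at *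
  suffices a = b by
    rw [← hga, ← hgb] at this
    exact_mod_cast this
  have hf' : ∀ x y, f.symm (gBr b x y) = gBr a (f.symm x) (f.symm y) := fun x y => by
    rw [LinearEquiv.symm_apply_eq, hf]; simp
  -- `f e₅` lies in the derived algebra
  have h5 : f (e 4) = -gBr b (f (e 0)) (f (e 1)) := by
    rw [← hf, ← map_neg]
    congr 1
    ext k
    fin_cases k <;> simp [gBr_eq, e]
  have h50 : f (e 4) 0 = 0 := by simp [h5, gBr_eq]
  have h51 : f (e 4) 1 = 0 := by simp [h5, gBr_eq]
  have h52 : f (e 4) 2 = 0 := by simp [h5, gBr_eq]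
  have h53 : f (e 4) 3 = 0 := by simp [h5, gBr_eq]
  -- the image of `e₅ - 2e₃` centralizes `⟨e₃, …, e₈⟩`
  obtain ⟨w, hw⟩ : ∃ w, w = e 4 - (2 : ℝ) • e 2 := ⟨_, rfl⟩
  obtain ⟨hw0, hw1⟩ := map_V ha hb f hf w (by simp [hw, e])
  have hcent : ∀ y : Fin 8 → ℝ, y 0 = 0 ∧ y 1 = 0 → gBr b (f w) y = 0 := by
    intro y hy
    obtain ⟨y0, y1⟩ := map_V hb ha f.symm hf' y hy
    have : gBr a w (f.symm y) = 0 := by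
      ext k
      fin_cases k <;> simp [gBr_eq, hw, e, y0, y1]
    have h := hf w (f.symm y)
    rw [this] at h
    simpa using h.symm
  have hw3 : f w 3 = 0 := by
    have := congrFun (hcent (e 2) (by simp [e])) 7
    simpa [gBr_eq, e] using this
  have hw2 : f w 2 = -2 * f w 4 := by
    have := congrFun (hcent (e 3) (by simp [e])) 7
    simp [gBr_eq, e] at this
    linarith
  -- the two invariant quadratic forms, transported by `f`
  have Q5 : ∀ x, (x 0 ^ 2 + (1 + a) * x 1 ^ 2) • f (e 7) =
      (f (e 4) 4 * (f x 0 ^ 2 + (1 + b) * f x 1 ^ 2)) • e 7 := fun x => by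
    have h := congrArg f (gBr_gBr_self a x (e 4) (by simp [e]) (by simp [e]))
    rw [hf, hf, gBr_gBr_self b _ _ h50 h51, map_smul, h52, h53] at h
    simpa [e] using h.symm
  have R : ∀ x, (x 0 ^ 2 + (3 + a) * x 1 ^ 2) • f (e 7) =
      (f w 4 * (f x 0 ^ 2 + (3 + b) * f x 1 ^ 2)) • e 7 := fun x => by
    have h := congrArg f (gBr_gBr_self a x w (by simp [hw, e]) (by simp [hw, e]))
    rw [hf, hf, gBr_gBr_self b _ _ hw0 hw1, map_smul, hw3, hw2] at h
    have e1 : w 4 = 1 := by simp [hw, e]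
    have e2 : w 2 = -2 := by simp [hw, e]
    have e3 : w 3 = 0 := by simp [hw, e]
    rw [e1, e2, e3] at h
    convert h.symm using 2 <;> ring
  have q (x) := congrFun (Q5 x) 7
  have r (x) := congrFun (R x) 7
  have hd : f (e 7) 7 ≠ 0 := by
    intro hd
    -- `f e₈` is a multiple of `e₈`, so it would vanish
    have hz : f (e 7) = 0 := by
      have h := Q5 (e 0)
      have e00 : e 0 0 = 1 := by simp [e]
      have e01 : e 0 1 = 0 := by simp [e]
      have e77 : e 7 7 = 1 := by simp [e]
      obtain ⟨m, hm⟩ : ∃ m : ℝ, f (e 7) = m • e 7 :=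
        ⟨_, by simpa only [e00, e01, one_pow, zero_pow two_ne_zero, mul_zero, add_zero,
          one_smul] using h⟩
      rw [hm, Pi.smul_apply, e77, smul_eq_mul, mul_one] at hd
      rw [hm, hd, zero_smul]
    have := congrFun ((map_eq_zero_iff f f.injective).1 hz) 7
    simp [e] at this
  have q1 := q (e 0)
  have q2 := q (e 1)
  have q3 := q (e 0 + e 1)
  have r1 := r (e 0)
  have r2 := r (e 1)
  have r3 := r (e 0 + e 1)
  rw [map_add] at q3 r3
  have e70 : e 7 7 = 1 := by simp [e]
  have e00 : e 0 0 = 1 := by simp [e]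
  have e01 : e 0 1 = 0 := by simp [e]
  have e10 : e 1 0 = 0 := by simp [e]
  have e11 : e 1 1 = 1 := by simp [e]
  simp only [Pi.smul_apply, Pi.add_apply, smul_eq_mul, e70, e00, e01, e10, e11] at q1 q2 q3 r1 r2 r3
  have := eq_of_forms (c := 1 + a) (u := 1 + b) (D := f (e 4) 4) (r := f w 4)
    (p := f (e 0) 0) (q := f (e 0) 1) (s := f (e 1) 0) (t := f (e 1) 1) (by positivity) (by positivity) hd
    (by linear_combination q1) (by linear_combination q2) (by linear_combination q3)
    (by linear_combination r1) (by linear_combination r2) (by linear_combination r3)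
  linarith
end
end

section
/- Let α and α' be positive rational numbers. If the complex Lie algebras 𝔤_α^ℂ and 𝔤_{α'}^ℂ (the complexifications of 𝔤_α and 𝔤_{α'}, i.e. the 8-dimensional complex Lie algebras defined by the same basis and structure constants over ℂ) are isomorphic as complex Lie algebras, then α = α'. -/
/-!
Write `e₀, …, e₇` for the standard basis. The sums `⟨e₄,…,e₇⟩ ⊇ ⟨e₅,e₆,e₇⟩ ⊇ ⟨e₇⟩` are the lower
central series, so an isomorphism `f` preserves them, and it also preserves `⟨e₂,…,e₇⟩`, the
centralizer of `⟨e₅,e₆,e₇⟩`. Let `A` be the `2 × 2` matrix induced by `f` on `g / ⟨e₂,…,e₇⟩`, with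
columns `(a₀, a₁)`, `(b₀, b₁)` and determinant `D`.

Evaluating `f` on `e₄ = -[e₀, e₁]`, `e₅ = -[e₀, e₄]`, `e₇ = -[e₀, e₅]` shows that `f e₄ ≡ D e₄` modulo
`⟨e₅,e₆,e₇⟩` and that `f e₇ ≠ 0` is a multiple of `D e₇`, so `D ≠ 0`. The relations `[e₂, e₄] = 0`,
`[e₂, e₃] = -e₇`, `[e₃, e₄] = 2 e₇` force `f e₂ ≡ c₂ e₂ + c₄ e₄` modulo `⟨e₅,e₆,e₇⟩` with
`c₂ + 2 c₄ = D`. Now `[e₀, e₂] = 0` gives `a₀ c₄ = 0` and `a₁ (c₂ - (1 + α') c₄) = 0`, so either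
`a₁ = 0`, `c₄ = 0`, `c₂ = D`, or `a₀ = 0`, `c₂ = (1 + α') c₄`. Comparing the `e₅`- and `e₆`-parts of the
images in `[e₁, e₂] = e₆ = -[e₁, e₄] / (1 + α)`, the first case gives `α = α'` and the second gives
`3 + α' = -(1 + α)`, which is excluded by positivity.
-/

noncomputable section

/-- Structure constants of the complexification `g_alpha ⊗ ℂ`. -/
def gAC (a : ℝ) (i j : Fin 8) : Fin 8 → ℂ :=
  if i = 0 ∧ j = 1 then -(Pi.single 4 1 : Fin 8 → ℂ)
  else if i = 0 ∧ j = 4 then -(Pi.single 5 1 : Fin 8 → ℂ)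
  else if i = 1 ∧ j = 3 then ((a : ℂ) - 1) • (Pi.single 5 1 : Fin 8 → ℂ)
  else if i = 0 ∧ j = 3 then (1 + (a : ℂ)) • (Pi.single 6 1 : Fin 8 → ℂ)
  else if i = 1 ∧ j = 2 then (Pi.single 6 1 : Fin 8 → ℂ)
  else if i = 1 ∧ j = 4 then -((1 + (a : ℂ)) • (Pi.single 6 1 : Fin 8 → ℂ))
  else if i = 0 ∧ j = 5 then -(Pi.single 7 1 : Fin 8 → ℂ)
  else if i = 1 ∧ j = 6 then -(Pi.single 7 1 : Fin 8 → ℂ)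
  else if i = 2 ∧ j = 3 then -(Pi.single 7 1 : Fin 8 → ℂ)
  else if i = 3 ∧ j = 4 then (2 : ℂ) • (Pi.single 7 1 : Fin 8 → ℂ)
  else 0

/-- The ℂ-bilinear bracket of the complexification `g_alpha ⊗ ℂ`. -/
def gBrC (a : ℝ) (x y : Fin 8 → ℂ) : Fin 8 → ℂ :=
  ∑ i : Fin 8, ∑ j : Fin 8, (x i * y j) • (gAC a i j - gAC a j i)

theorem gBrC_apply (a : ℝ) (x y : Fin 8 → ℂ) :
    gBrC a x y = ![0, 0, 0, 0,
      -(x 0 * y 1 - x 1 * y 0),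
      -(x 0 * y 4 - x 4 * y 0) + ((a : ℂ) - 1) * (x 1 * y 3 - x 3 * y 1),
      (1 + (a : ℂ)) * (x 0 * y 3 - x 3 * y 0) + (x 1 * y 2 - x 2 * y 1)
        - (1 + (a : ℂ)) * (x 1 * y 4 - x 4 * y 1),
      -(x 0 * y 5 - x 5 * y 0) - (x 1 * y 6 - x 6 * y 1) - (x 2 * y 3 - x 3 * y 2)
        + 2 * (x 3 * y 4 - x 4 * y 3)] := by
  unfold gBrC
  simp only [Fin.sum_univ_eight]
  ext k
  fin_cases k <;> simp [gAC] <;> ring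

/-- The images `E i = f (e i)` of the basis vectors under an isomorphism satisfy the brackets of
`g_α` inside `g_α'`; only the brackets listed here are needed. The two
alternatives come from `a₁ = 0` and `a₀ = 0`, that is `E 0 1 = 0` and `E 0 0 = 0`. -/
theorem param_eq_of_images (a b : ℝ) (ha : (1 + (a : ℂ)) ≠ 0) (hb : (1 + (b : ℂ)) ≠ 0)
    (E : Fin 8 → Fin 8 → ℂ) (hne : E 7 ≠ 0)
    (h01 : -E 4 = gBrC b (E 0) (E 1))
    (h04 : -E 5 = gBrC b (E 0) (E 4))
    (h14 : -((1 + (a : ℂ)) • E 6) = gBrC b (E 1) (E 4))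
    (h05 : -E 7 = gBrC b (E 0) (E 5))
    (h25 : 0 = gBrC b (E 2) (E 5))
    (h26 : 0 = gBrC b (E 2) (E 6))
    (h35 : 0 = gBrC b (E 3) (E 5))
    (h36 : 0 = gBrC b (E 3) (E 6))
    (h24 : 0 = gBrC b (E 2) (E 4))
    (h23 : -E 7 = gBrC b (E 2) (E 3))
    (h34 : (2 : ℂ) • E 7 = gBrC b (E 3) (E 4))
    (h02 : 0 = gBrC b (E 0) (E 2))
    (h12 : E 6 = gBrC b (E 1) (E 2)) :
    (a : ℂ) = b ∨ (3 + (b : ℂ)) = -(1 + a) := by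
  simp only [gBrC_apply] at *
  -- Images of the lower central series lie in the lower central series.
  have z4 : E 4 0 = 0 ∧ E 4 1 = 0 ∧ E 4 2 = 0 ∧ E 4 3 = 0 :=
    ⟨by simpa using congrFun h01 0, by simpa using congrFun h01 1,
      by simpa using congrFun h01 2, by simpa using congrFun h01 3⟩
  obtain ⟨z40, z41, z42, z43⟩ := z4
  have z5 : E 5 0 = 0 ∧ E 5 1 = 0 ∧ E 5 2 = 0 ∧ E 5 3 = 0 ∧ E 5 4 = 0 :=
    ⟨by simpa using congrFun h04 0, by simpa using congrFun h04 1,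
      by simpa using congrFun h04 2, by simpa using congrFun h04 3,
      by simpa [z40, z41] using congrFun h04 4⟩
  obtain ⟨z50, z51, z52, z53, z54⟩ := z5
  have z6 : E 6 0 = 0 ∧ E 6 1 = 0 ∧ E 6 2 = 0 ∧ E 6 3 = 0 ∧ E 6 4 = 0 :=
    ⟨by simpa [ha] using congrFun h14 0, by simpa [ha] using congrFun h14 1,
      by simpa [ha] using congrFun h14 2, by simpa [ha] using congrFun h14 3,
      by simpa [ha, z40, z41] using congrFun h14 4⟩
  obtain ⟨z60, z61, z62, z63, z64⟩ := z6
  have d7 : E 7 7 ≠ 0 := by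
    intro h7
    apply hne
    ext k
    have hk := congrFun h05 k
    fin_cases k <;> simpa [z50, z51, z52, z53, z54, h7] using hk
  -- The induced maps on the graded pieces `⟨e₄⟩` and `⟨e₅, e₆⟩`, in terms of `A`.
  have c44 : E 4 4 = E 0 0 * E 1 1 - E 0 1 * E 1 0 := by
    have := congrFun h01 4
    simp at this
    linear_combination -this
  have c55 : E 5 5 = E 0 0 * E 4 4 := by
    have := congrFun h04 5
    simp [z40, z41, z43] at this
    linear_combination this
  have c56 : E 5 6 = (1 + (b : ℂ)) * E 0 1 * E 4 4 := by
    have := congrFun h04 6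
    simp [z40, z41, z42, z43] at this
    linear_combination this
  have c65 : (1 + (a : ℂ)) * E 6 5 = E 1 0 * E 4 4 := by
    have := congrFun h14 5
    simp [z40, z41, z43] at this
    linear_combination this
  have c66 : (1 + (a : ℂ)) * E 6 6 = (1 + (b : ℂ)) * E 1 1 * E 4 4 := by
    have := congrFun h14 6
    simp [z40, z41, z42, z43] at this
    linear_combination this
  have c77 : E 7 7 = E 4 4 * (E 0 0 ^ 2 + (1 + (b : ℂ)) * E 0 1 ^ 2) := by
    have := congrFun h05 7
    simp [z50, z51, z52, z53, z54] at this
    rw [c55, c56] at this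
    linear_combination -this
  have hD : E 4 4 ≠ 0 := by
    intro h0
    exact d7 (by rw [c77, h0, zero_mul])
  -- A vector centralizing `f e₅` and `f e₆` has no `e₀`- and `e₁`-component.
  have cent : ∀ x : Fin 8 → ℂ, x 0 * E 5 5 + x 1 * E 5 6 = 0 → x 0 * E 6 5 + x 1 * E 6 6 = 0 →
      x 0 = 0 ∧ x 1 = 0 := by
    intro x h5 h6
    rw [c55, c56] at h5
    have k5 : x 0 * E 0 0 + (1 + (b : ℂ)) * x 1 * E 0 1 = 0 := by
      apply mul_left_cancel₀ hD
      linear_combination h5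
    have k6 : x 0 * E 1 0 + (1 + (b : ℂ)) * x 1 * E 1 1 = 0 := by
      apply mul_left_cancel₀ hD
      linear_combination (1 + (a : ℂ)) * h6 - x 0 * c65 - x 1 * c66
    constructor
    · apply mul_left_cancel₀ hD
      linear_combination E 1 1 * k5 - E 0 1 * k6 + x 0 * c44
    · apply mul_left_cancel₀ (mul_ne_zero hb hD)
      linear_combination E 0 0 * k6 - E 1 0 * k5 + (1 + (b : ℂ)) * x 1 * c44
  obtain ⟨z20, z21⟩ := cent (E 2)
    (by have := congrFun h25 7
        simp [z50, z51, z52, z53, z54] at this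
        linear_combination this)
    (by have := congrFun h26 7
        simp [z60, z61, z62, z63, z64] at this
        linear_combination this)
  obtain ⟨z30, z31⟩ := cent (E 3)
    (by have := congrFun h35 7
        simp [z50, z51, z52, z53, z54] at this
        linear_combination this)
    (by have := congrFun h36 7
        simp [z60, z61, z62, z63, z64] at this
        linear_combination this)
  have z23 : E 2 3 = 0 := by
    have := congrFun h24 7
    simpa [z20, z21, z40, z41, z42, z43, hD] using this
  have p3 : E 3 3 * E 4 4 = E 7 7 := by
    have := congrFun h34 7
    simp [z30, z31, z40, z41, z42, z43] at this
    linear_combination -this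
  have c2 : E 2 2 + 2 * E 2 4 = E 4 4 := by
    have := congrFun h23 7
    simp [z20, z21, z23, z30, z31] at this
    have h33 : E 3 3 ≠ 0 := by
      intro h0
      exact d7 (by rw [← p3, h0, zero_mul])
    apply mul_left_cancel₀ h33
    linear_combination this - p3
  have r5 : E 0 0 * E 2 4 = 0 := by
    have := congrFun h02 5
    simp [z20, z21, z23] at this
    simpa using this
  have r6 : E 0 1 * (E 2 2 - (1 + (b : ℂ)) * E 2 4) = 0 := by
    have := congrFun h02 6
    simp [z20, z21, z23] at this
    linear_combination -this
  have s5 : E 1 0 * (E 4 4 + (1 + (a : ℂ)) * E 2 4) = 0 := by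
    have := congrFun h12 5
    simp [z20, z21, z23] at this
    linear_combination (1 + (a : ℂ)) * this - c65
  have s6 : E 1 1 * ((1 + (b : ℂ)) * E 4 4
      - (1 + (a : ℂ)) * (E 2 2 - (1 + (b : ℂ)) * E 2 4)) = 0 := by
    have := congrFun h12 6
    simp [z20, z21, z23] at this
    linear_combination (1 + (a : ℂ)) * this - c66
  by_cases h00 : E 0 0 = 0
  · right
    have h10 : E 1 0 ≠ 0 := by
      intro h0
      exact hD (by rw [c44, h00, h0]; ring)
    have h01' : E 0 1 ≠ 0 := by
      intro h0
      exact hD (by rw [c44, h00, h0]; ring)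
    have t1 := (mul_eq_zero.mp r6).resolve_left h01'
    have t2 := (mul_eq_zero.mp s5).resolve_left h10
    have h24' : E 2 4 ≠ 0 := by
      intro h0
      exact hD (by rw [h0] at t2; simpa using t2)
    apply mul_left_cancel₀ h24'
    linear_combination t2 + c2 - t1
  · left
    have h24' : E 2 4 = 0 := (mul_eq_zero.mp r5).resolve_left h00
    have h22 : E 2 2 = E 4 4 := by simpa [h24'] using c2
    have h01' : E 0 1 = 0 := by simpa [h24', h22, hD] using r6
    have h11 : E 1 1 ≠ 0 := by
      intro h0
      exact hD (by rw [c44, h01', h0]; ring)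
    have t := (mul_eq_zero.mp s6).resolve_left h11
    rw [h24', h22] at t
    apply mul_left_cancel₀ hD
    linear_combination -t

/-- if the complexifications `g_alpha ⊗ ℂ` and `g_alpha' ⊗ ℂ` are isomorphic
as complex Lie algebras, then `α = α'`. -/
theorem statement6 (α α' : ℚ) (hα : 0 < α) (hα' : 0 < α')
    (h : ∃ f : (Fin 8 → ℂ) ≃ₗ[ℂ] (Fin 8 → ℂ),
      ∀ x y : Fin 8 → ℂ, f (gBrC (α : ℝ) x y) = gBrC (α' : ℝ) (f x) (f y)) :
    α = α' := by
  obtain ⟨f, hf⟩ := h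
  have key := fun i j : Fin 8 => hf (Pi.single i 1) (Pi.single j 1)
  have hα0 : (0 : ℝ) < α := by exact_mod_cast hα
  have hα0' : (0 : ℝ) < α' := by exact_mod_cast hα'
  have basis_br : ∀ (i j k : Fin 8) (c : ℂ),
      gBrC (α : ℝ) (Pi.single i 1) (Pi.single j 1) = c • (Pi.single k 1 : Fin 8 → ℂ) →
      c • f (Pi.single k 1) = gBrC (α' : ℝ) (f (Pi.single i 1)) (f (Pi.single j 1)) := by
    intro i j k c hc
    rw [← key, hc, map_smul]
  have pos_ne : ∀ r : ℝ, 0 < r → (1 + (r : ℂ)) ≠ 0 := by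
    intro r hr h0
    have : (1 + r : ℝ) = 0 := by exact_mod_cast h0
    linarith
  have alt := param_eq_of_images (α : ℝ) (α' : ℝ) (pos_ne _ hα0) (pos_ne _ hα0')
    (fun i => f (Pi.single i 1)) (by simp [Pi.single_eq_zero_iff])
    (by
      simpa using basis_br 0 1 4 (-1) (by
        rw [gBrC_apply]; ext k; fin_cases k <;> simp))
    (by
      simpa using basis_br 0 4 5 (-1) (by
        rw [gBrC_apply]; ext k; fin_cases k <;> simp))
    (by
      rw [← neg_smul]
      exact basis_br 1 4 6 (-(1 + ((α : ℝ) : ℂ))) (by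
        rw [gBrC_apply]; ext k; fin_cases k <;> simp))
    (by
      simpa using basis_br 0 5 7 (-1) (by
        rw [gBrC_apply]; ext k; fin_cases k <;> simp))
    (by
      simpa using basis_br 2 5 0 0 (by
        rw [gBrC_apply]; ext k; fin_cases k <;> simp))
    (by
      simpa using basis_br 2 6 0 0 (by
        rw [gBrC_apply]; ext k; fin_cases k <;> simp))
    (by
      simpa using basis_br 3 5 0 0 (by
        rw [gBrC_apply]; ext k; fin_cases k <;> simp))
    (by
      simpa using basis_br 3 6 0 0 (by
        rw [gBrC_apply]; ext k; fin_cases k <;> simp))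
    (by
      simpa using basis_br 2 4 0 0 (by
        rw [gBrC_apply]; ext k; fin_cases k <;> simp))
    (by
      simpa using basis_br 2 3 7 (-1) (by
        rw [gBrC_apply]; ext k; fin_cases k <;> simp))
    (by
      simpa using basis_br 3 4 7 2 (by
        rw [gBrC_apply]; ext k; fin_cases k <;> simp))
    (by
      simpa using basis_br 0 2 0 0 (by
        rw [gBrC_apply]; ext k; fin_cases k <;> simp))
    (by
      simpa using basis_br 1 2 6 1 (by
        rw [gBrC_apply]; ext k; fin_cases k <;> simp))
  rcases alt with h1 | h2
  · exact_mod_cast h1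
  · have h3 : (3 + (α' : ℝ)) = -(1 + (α : ℝ)) := by exact_mod_cast h2
    linarith
end
end

section
/- For every positive rational number α, the Lie algebra 𝔤_α admits a symplectic form; that is, there exists an alternating bilinear form ω : 𝔤_α × 𝔤_α → ℝ which is closed (ω([x,y],z) + ω([y,z],x) + ω([z,x],y) = 0 for all x,y,z) and nondegenerate (for every nonzero x ∈ 𝔤_α there exists y ∈ 𝔤_α with ω(x,y) ≠ 0). This gives an invariant generalized complex structure of type 0 on the associated nilmanifold N_α. -/
/-!
Write `e¹, …, e⁸` for the dual basis, so that `de¹ = de² = de³ = de⁴ = 0`, `de⁵ = e¹²`,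
`de⁶ = e¹⁵ + (1-α)e²⁴`, `de⁷ = -(1+α)e¹⁴ - e²³ + (1+α)e²⁵`, `de⁸ = e¹⁶ + e²⁷ + e³⁴ - 2e⁴⁵`.
The Lie algebra is graded with `e₁, e₂` in weight 1, `e₃, e₄, e₅` in weight 2, `e₆, e₇` in
weight 3 and `e₈` in weight 4. The closed 2-forms of weight 5 are the multiples of
`(1+α)(e¹⁸ + e⁵⁷ - (3+α)e⁴⁶) - e³⁷`;
its radical contains `e₂`, and adding the closed form `(1+α)e²³` removes the radical. The sum
is nondegenerate as soon as `α ≠ -1, -3`.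

The form is `omegaForm`; closedness is a polynomial identity in the coordinates of the bracket
(`gBr_eq`), and nondegeneracy follows by pairing a vector with each of the basis vectors.
-/

noncomputable section

/-- The 2-form `(1+a)(e¹⁸ + e⁵⁷ - (3+a)e⁴⁶ + e²³) - e³⁷` (indices shifted down by one in the
code), in coordinates. -/
def omegaForm (a : ℝ) : AlternatingMap ℝ (Fin 8 → ℝ) ℝ (Fin 2) where
  toFun v :=
    (1 + a) * ((v 0 0 * v 1 7 - v 0 7 * v 1 0) + (v 0 4 * v 1 6 - v 0 6 * v 1 4)
      - (3 + a) * (v 0 3 * v 1 5 - v 0 5 * v 1 3) + (v 0 1 * v 1 2 - v 0 2 * v 1 1))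
      - (v 0 2 * v 1 6 - v 0 6 * v 1 2)
  map_update_add' := by
    intro inst v i x y
    rw [Subsingleton.elim inst (instDecidableEqFin 2)]
    fin_cases i <;> simp [Function.update] <;> ring
  map_update_smul' := by
    intro inst v i c x
    rw [Subsingleton.elim inst (instDecidableEqFin 2)]
    fin_cases i <;> simp [Function.update] <;> ring
  map_eq_zero_of_eq' := by
    intro v i j h hij
    have h01 : v 0 = v 1 := by
      fin_cases i <;> fin_cases j <;> simp_all
    rw [h01]
    ring

theorem omegaForm_apply (a : ℝ) (x y : Fin 8 → ℝ) :
    omegaForm a ![x, y] =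
      (1 + a) * ((x 0 * y 7 - x 7 * y 0) + (x 4 * y 6 - x 6 * y 4)
        - (3 + a) * (x 3 * y 5 - x 5 * y 3) + (x 1 * y 2 - x 2 * y 1))
        - (x 2 * y 6 - x 6 * y 2) := rfl

/-- `g_alpha` admits a symplectic form: a closed, nondegenerate alternating
bilinear form. -/
theorem statement8 (α : ℚ) (hα : 0 < α) :
    ∃ ω : AlternatingMap ℝ (Fin 8 → ℝ) ℝ (Fin 2),
      (∀ x y z : Fin 8 → ℝ,
        ω ![gBr (α : ℝ) x y, z] + ω ![gBr (α : ℝ) y z, x] + ω ![gBr (α : ℝ) z x, y] = 0) ∧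
      (∀ x : Fin 8 → ℝ, x ≠ 0 → ∃ y : Fin 8 → ℝ, ω ![x, y] ≠ 0) := by
  have ha : (0 : ℝ) < (α : ℝ) := by exact_mod_cast hα
  generalize (α : ℝ) = a at ha ⊢
  refine ⟨omegaForm a, ?_, ?_⟩
  · intro x y z
    simp only [omegaForm_apply, gBr_eq]
    simp
    ring
  · intro x
    contrapose!
    intro h
    have h1 : 1 + a ≠ 0 := by positivity
    have h3 : 3 + a ≠ 0 := by positivity
    have hk : ∀ k, omegaForm a ![x, e k] = 0 := fun k => h _
    simp only [omegaForm_apply, e] at hk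
    have x7 : x 7 = 0 := by simpa [Pi.single_apply, h1] using hk 0
    have x2 : x 2 = 0 := by simpa [Pi.single_apply, h1] using hk 1
    have x5 : x 5 = 0 := by simpa [Pi.single_apply, h1, h3] using hk 3
    have x6 : x 6 = 0 := by simpa [Pi.single_apply, h1] using hk 4
    have x3 : x 3 = 0 := by simpa [Pi.single_apply, h1, h3] using hk 5
    have x0 : x 0 = 0 := by simpa [Pi.single_apply, h1] using hk 7
    -- The two coordinates touched by `e³⁷` need the vanishing of `x 6` and `x 2`.
    have x1 : x 1 = 0 := by simpa [Pi.single_apply, h1, x6] using hk 2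
    have x4 : x 4 = 0 := by simpa [Pi.single_apply, h1, x2] using hk 6
    funext k
    fin_cases k <;> simp [*]
end
end

section
/- For every positive rational number α, the Lie algebra 𝔤_α carries the data of an invariant generalized complex structure of type 2: there exist a nonzero ℂ-valued alternating bilinear form Ω on the complexification 𝔤_α^ℂ and real alternating bilinear forms B and ω on 𝔤_α such that (i) Ω is decomposable, i.e. Ω(x,y)Ω(z,w) − Ω(x,z)Ω(y,w) + Ω(x,w)Ω(y,z) = 0 for all x,y,z,w ∈ 𝔤_α^ℂ; (ii) Ω is closed, i.e. Ω([x,y],z) + Ω([y,z],x) + Ω([z,x],y) = 0 for all x,y,z ∈ 𝔤_α^ℂ; (iii) writing η = B + iω, extended ℂ-bilinearly to 𝔤_α^ℂ, and dη(x,y,z) = −η([x,y],z) + η([x,z],y) − η([y,z],x), one has dη(x,y,z) = 0 for all x,y,z in the kernel K = {v ∈ 𝔤_α^ℂ : Ω(v,w) = 0 for all w ∈ 𝔤_α^ℂ} (equivalently, d(B+iω) ∧ Ω = 0); and (iv) the real subspace Δ = {v ∈ 𝔤_α : Ω(v ⊗ 1, w) = 0 for all w ∈ 𝔤_α^ℂ}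 has dimension 4 and the restriction of ω to Δ is nondegenerate (equivalently, ω² ∧ Ω ∧ Ω̄ ≠ 0). -/
/-!
Write `e¹, …, e⁸` for the dual basis. The forms `e¹, …, e⁴` are closed and
`de⁵ = e¹²`, `de⁶ = e¹⁵ + (1-α)e²⁴`, `de⁷ = -(1+α)e¹⁴ - e²³ + (1+α)e²⁵`,
`de⁸ = e¹⁶ + e²⁷ + e³⁴ - 2e⁴⁵`. Put
`Ω = (e¹ - p e²) ∧ (e⁴ - q e³)`, `η = (1+i)(e⁶⁷ - p e⁵⁸ - q(1-α) e³⁸)`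
with `p` and `q` to be chosen. Then `Ω` is decomposable and closed (`formΩ_apply`). On its
kernel `e¹ = p e²` and `e⁴ = q e³`, so that
`dη = (1+i)(-(p² + 1 + α) e²⁵⁶ + (2αpq + 1) e²³⁶)` there (`formη_closed_on_kernel`). Both
coefficients vanish for `p = i√(1+α)` and `q = i/(2α√(1+α))`, where `α ≠ 0` is needed. As
`α > 0`, these are nonzero imaginary numbers, so the real kernel `Δ` of `Ω` is spanned by
`e₅, …, e₈` (`mem_subspaceΔ_iff_kernel`). On `Δ` the form `ω = Im η` restricts to
`e⁶⁷ - √(1+α) e⁵⁸`, which is nondegenerate.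

Comments number the basis from 1 and the code numbers coordinates from 0.
-/

noncomputable section

/-- Inclusion of real vectors into the complexification, `v ↦ v ⊗ 1`. -/
def realify (v : Fin 8 → ℝ) : Fin 8 → ℂ := fun k => (v k : ℂ)

/-- The wedge product of two linear functionals, `(f ∧ g)(x, y) = f x * g y - f y * g x`,
encoded as a `2 × 2` determinant. -/
def wedge {R : Type*} [CommRing R] (f g : (Fin 8 → R) →ₗ[R] R) :
    AlternatingMap R (Fin 8 → R) R (Fin 2) :=
  (Matrix.detRowAlternating (R := R) (n := Fin 2)).compLinearMap (LinearMap.pi ![f, g])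

theorem wedge_apply {R : Type*} [CommRing R] (f g : (Fin 8 → R) →ₗ[R] R) (x y : Fin 8 → R) :
    wedge f g ![x, y] = f x * g y - f y * g x := by
  have : wedge f g ![x, y] = Matrix.det !![f x, g x; f y, g y] := by
    unfold wedge
    rw [AlternatingMap.compLinearMap_apply]
    change Matrix.det _ = _
    congr 1
    ext i j
    fin_cases i <;> fin_cases j <;> simp [LinearMap.pi_apply]
  rw [this, Matrix.det_fin_two_of]
  ring

/-- The coordinate 2-form `eⁱ ∧ eʲ`. -/
def coordWedge (R : Type*) [CommRing R] (i j : Fin 8) :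
    AlternatingMap R (Fin 8 → R) R (Fin 2) :=
  wedge (LinearMap.proj i) (LinearMap.proj j)

theorem coordWedge_apply {R : Type*} [CommRing R] (i j : Fin 8) (x y : Fin 8 → R) :
    coordWedge R i j ![x, y] = x i * y j - y i * x j := by
  simp [coordWedge, wedge_apply]

/-- The complexified bracket in coordinates. -/
theorem gBrC_eq (a : ℝ) (x y : Fin 8 → ℂ) :
    gBrC a x y = ![0, 0, 0, 0,
      -(x 0 * y 1 - y 0 * x 1),
      -(x 0 * y 4 - y 0 * x 4) + (a - 1) * (x 1 * y 3 - y 1 * x 3),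
      (1 + a) * (x 0 * y 3 - y 0 * x 3) + (x 1 * y 2 - y 1 * x 2)
        - (1 + a) * (x 1 * y 4 - y 1 * x 4),
      -(x 0 * y 5 - y 0 * x 5) - (x 1 * y 6 - y 1 * x 6) - (x 2 * y 3 - y 2 * x 3)
        + 2 * (x 3 * y 4 - y 3 * x 4)] := by
  unfold gBrC
  simp only [Fin.sum_univ_eight, gAC, Fin.reduceEq, and_false, false_and, and_true,
    true_and, if_true, if_false, sub_zero, zero_sub, smul_zero, add_zero, sub_self]
  ext k
  fin_cases k <;> simp <;> ring

/-- The complex 2-form `(e¹ - p e²) ∧ (e⁴ - q e³)`. -/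
def formΩ (p q : ℂ) : AlternatingMap ℂ (Fin 8 → ℂ) ℂ (Fin 2) :=
  wedge (LinearMap.proj 0 - p • LinearMap.proj 1) (LinearMap.proj 3 - q • LinearMap.proj 2)

theorem formΩ_apply (p q : ℂ) (x y : Fin 8 → ℂ) :
    formΩ p q ![x, y] =
      (x 0 - p * x 1) * (y 3 - q * y 2) - (y 0 - p * y 1) * (x 3 - q * x 2) := by
  simp [formΩ, wedge_apply]

theorem formΩ_kernel (p q : ℂ) (x : Fin 8 → ℂ) :
    (∀ w : Fin 8 → ℂ, formΩ p q ![x, w] = 0) ↔ x 0 = p * x 1 ∧ x 3 = q * x 2 := by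
  constructor
  · intro h
    have h0 := h (Pi.single 0 1)
    have h3 := h (Pi.single 3 1)
    simp [formΩ_apply] at h0 h3
    exact ⟨sub_eq_zero.mp h3, by linear_combination -h0⟩
  · rintro ⟨h0, h3⟩ w
    rw [formΩ_apply, h0, h3]
    ring

/-- The 2-form `e⁶⁷ - p e⁵⁸ - q(1-α) e³⁸`, which is `η` up to the factor `1 + i`. -/
def formη (a : ℝ) (p q : ℂ) : AlternatingMap ℂ (Fin 8 → ℂ) ℂ (Fin 2) :=
  coordWedge ℂ 5 6 - p • coordWedge ℂ 4 7 - (q * (1 - a)) • coordWedge ℂ 2 7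

theorem formη_apply (a : ℝ) (p q : ℂ) (x y : Fin 8 → ℂ) :
    formη a p q ![x, y] = (x 5 * y 6 - y 5 * x 6) - p * (x 4 * y 7 - y 4 * x 7)
      - q * (1 - a) * (x 2 * y 7 - y 2 * x 7) := by
  simp [formη, coordWedge_apply]

/-- On the kernel of `Ω` one has
`d(formη) = -(p² + 1 + α) e²⁵⁶ + (2αpq + 1) e²³⁶`, and the two relations kill both terms. -/
theorem formη_closed_on_kernel (a : ℝ) (p q : ℂ) (h₁ : p ^ 2 + 1 + a = 0)
    (h₂ : 2 * a * (p * q) + 1 = 0) (x y z : Fin 8 → ℂ)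
    (hx : x 0 = p * x 1 ∧ x 3 = q * x 2) (hy : y 0 = p * y 1 ∧ y 3 = q * y 2)
    (hz : z 0 = p * z 1 ∧ z 3 = q * z 2) :
    -formη a p q ![gBrC a x y, z] + formη a p q ![gBrC a x z, y]
      - formη a p q ![gBrC a y z, x] = 0 := by
  simp only [formη_apply, gBrC_eq, hx.1, hx.2, hy.1, hy.2, hz.1, hz.2]
  simp
  -- The multipliers are the minors `e²⁵⁶(x, y, z)` and `e²³⁶(x, y, z)`.
  linear_combination
    -(x 1 * (y 4 * z 5 - y 5 * z 4) - x 4 * (y 1 * z 5 - y 5 * z 1)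
      + x 5 * (y 1 * z 4 - y 4 * z 1)) * h₁
    + (x 1 * (y 2 * z 5 - y 5 * z 2) - x 2 * (y 1 * z 5 - y 5 * z 1)
      + x 5 * (y 1 * z 2 - y 2 * z 1)) * h₂

/-- The subspace of vectors in `ℝ⁸` whose first four coordinates vanish. -/
def subspaceΔ : Submodule ℝ (Fin 8 → ℝ) :=
  LinearMap.ker (LinearMap.funLeft ℝ ℝ (Fin.castLE (by norm_num : 4 ≤ 8)))

theorem mem_subspaceΔ (v : Fin 8 → ℝ) :
    v ∈ subspaceΔ ↔ v 0 = 0 ∧ v 1 = 0 ∧ v 2 = 0 ∧ v 3 = 0 := by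
  simp [subspaceΔ, funext_iff, Fin.forall_fin_succ, LinearMap.funLeft_apply]

theorem finrank_subspaceΔ : Module.finrank ℝ subspaceΔ = 4 := by
  have h := LinearMap.finrank_range_add_finrank_ker
    (LinearMap.funLeft ℝ ℝ (Fin.castLE (by norm_num : 4 ≤ 8)))
  rw [LinearMap.range_eq_top.mpr
    (LinearMap.funLeft_surjective_of_injective _ _ _ (Fin.castLE_injective _))] at h
  simp only [finrank_top, Module.finrank_fin_fun] at h
  change _ + Module.finrank ℝ subspaceΔ = 8 at h
  omega

/-- When `p = i s` and `q = i r` with `s, r` nonzero reals, the real kernel of `Ω` is `Δ`. -/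
theorem mem_subspaceΔ_iff_kernel {s r : ℝ} (hs : s ≠ 0) (hr : r ≠ 0) (v : Fin 8 → ℝ) :
    v ∈ subspaceΔ ↔
      ∀ w : Fin 8 → ℂ, formΩ (Complex.I * s) (Complex.I * r) ![realify v, w] = 0 := by
  rw [formΩ_kernel, mem_subspaceΔ]
  simp only [realify, Complex.ext_iff]
  simp [hs, hr]
  tauto

/-- the data of an invariant generalized complex structure of type 2 on
`N_alpha`: a nonzero decomposable closed complex 2-form `Ω` on the complexification,
and real 2-forms `B, ω` such that `d(B + iω)` vanishes on the kernel of `Ω` and `ω` is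
nondegenerate on the 4-dimensional real subspace `Δ` annihilated by `Ω`. -/
theorem statement11 (α : ℚ) (hα : 0 < α) :
    ∃ Ω : AlternatingMap ℂ (Fin 8 → ℂ) ℂ (Fin 2), Ω ≠ 0 ∧
    ∃ B ω : AlternatingMap ℝ (Fin 8 → ℝ) ℝ (Fin 2),
      (∀ x y z w : Fin 8 → ℂ,
        Ω ![x, y] * Ω ![z, w] - Ω ![x, z] * Ω ![y, w] + Ω ![x, w] * Ω ![y, z] = 0) ∧
      (∀ x y z : Fin 8 → ℂ,
        Ω ![gBrC (α : ℝ) x y, z] + Ω ![gBrC (α : ℝ) y z, x]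
          + Ω ![gBrC (α : ℝ) z x, y] = 0) ∧
      (∃ η : AlternatingMap ℂ (Fin 8 → ℂ) ℂ (Fin 2),
        (∀ v w : Fin 8 → ℝ,
          η ![realify v, realify w] = (B ![v, w] : ℂ) + Complex.I * (ω ![v, w] : ℂ)) ∧
        (∀ x y z : Fin 8 → ℂ,
          (∀ w : Fin 8 → ℂ, Ω ![x, w] = 0) → (∀ w : Fin 8 → ℂ, Ω ![y, w] = 0) →
          (∀ w : Fin 8 → ℂ, Ω ![z, w] = 0) →
          -η ![gBrC (α : ℝ) x y, z] + η ![gBrC (α : ℝ) x z, y]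
            - η ![gBrC (α : ℝ) y z, x] = 0)) ∧
      (∃ Δ : Submodule ℝ (Fin 8 → ℝ),
        (∀ v : Fin 8 → ℝ, v ∈ Δ ↔ ∀ w : Fin 8 → ℂ, Ω ![realify v, w] = 0) ∧
        Module.finrank ℝ Δ = 4 ∧
        (∀ x ∈ Δ, x ≠ 0 → ∃ y ∈ Δ, ω ![x, y] ≠ 0)) := by
  set a : ℝ := (α : ℝ) with ha
  have hα' : 0 < a := by rw [ha]; exact_mod_cast hα
  obtain ⟨s, hs, hs2⟩ : ∃ s : ℝ, 0 < s ∧ s ^ 2 = 1 + a :=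
    ⟨√(1 + a), Real.sqrt_pos.mpr (by linarith), Real.sq_sqrt (by linarith)⟩
  obtain ⟨r, hr, hrs⟩ : ∃ r : ℝ, 0 < r ∧ 2 * a * (s * r) = 1 :=
    ⟨1 / (2 * a * s), by positivity, by field_simp⟩
  have hs2' : (s : ℂ) ^ 2 = 1 + a := by exact_mod_cast hs2
  have hrs' : 2 * (a : ℂ) * (s * r) = 1 := by exact_mod_cast hrs
  set p : ℂ := Complex.I * s with hp
  set q : ℂ := Complex.I * r with hq
  have h₁ : p ^ 2 + 1 + a = 0 := by
    rw [hp]; linear_combination (s : ℂ) ^ 2 * Complex.I_sq - hs2'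
  have h₂ : 2 * a * (p * q) + 1 = 0 := by
    rw [hp, hq]; linear_combination (2 * (a : ℂ) * (s * r)) * Complex.I_sq - hrs'
  refine ⟨formΩ p q, ?_,
    coordWedge ℝ 5 6 + s • coordWedge ℝ 4 7 + (r * (1 - a)) • coordWedge ℝ 2 7,
    coordWedge ℝ 5 6 - s • coordWedge ℝ 4 7 - (r * (1 - a)) • coordWedge ℝ 2 7, ?_, ?_, ?_, ?_⟩
  · intro h
    have h' : formΩ p q ![Pi.single 0 1, Pi.single 3 1] = 0 := by rw [h]; rfl
    simp [formΩ_apply] at h'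
  · intro x y z w
    simp only [formΩ_apply]
    ring
  · intro x y z
    simp [formΩ_apply, gBrC_eq]
  · refine ⟨(1 + Complex.I) • formη a p q, ?_, ?_⟩
    · intro v w
      simp only [AlternatingMap.smul_apply, AlternatingMap.add_apply, AlternatingMap.sub_apply,
        formη_apply, coordWedge_apply, realify, smul_eq_mul, hp, hq]
      push_cast
      linear_combination (-s * (v 4 * w 7 - w 4 * v 7)
        - r * (1 - a) * (v 2 * w 7 - w 2 * v 7) : ℂ) * Complex.I_sq
    · intro x y z hx hy hz
      rw [formΩ_kernel] at hx hy hz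
      simp only [AlternatingMap.smul_apply, smul_eq_mul]
      linear_combination (1 + Complex.I) * formη_closed_on_kernel a p q h₁ h₂ x y z hx hy hz
  · refine ⟨subspaceΔ, mem_subspaceΔ_iff_kernel hs.ne' hr.ne', finrank_subspaceΔ, ?_⟩
    intro x hx hx0
    rw [mem_subspaceΔ] at hx
    obtain ⟨h0, h1, h2, h3⟩ := hx
    -- This `y` turns `ω(x, y)` into a positive definite quadratic form in `x 4, …, x 7`.
    refine ⟨![0, 0, 0, 0, x 7, -x 6, x 5, -x 4], by simp [mem_subspaceΔ], fun h => hx0 ?_⟩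
    simp [coordWedge_apply, h2] at h
    have hsum : x 5 ^ 2 + x 6 ^ 2 + s * x 4 ^ 2 + s * x 7 ^ 2 = 0 := by linear_combination h
    have p4 : 0 ≤ s * x 4 ^ 2 := by positivity
    have p7 : 0 ≤ s * x 7 ^ 2 := by positivity
    have h5 : x 5 = 0 := by
      apply pow_eq_zero_iff two_ne_zero |>.mp; nlinarith [sq_nonneg (x 5), sq_nonneg (x 6)]
    have h6 : x 6 = 0 := by
      apply pow_eq_zero_iff two_ne_zero |>.mp; nlinarith [sq_nonneg (x 5), sq_nonneg (x 6)]
    have h4 : x 4 = 0 := by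
      have : s * x 4 ^ 2 = 0 := by nlinarith [sq_nonneg (x 5), sq_nonneg (x 6)]
      simpa [hs.ne'] using this
    have h7 : x 7 = 0 := by
      have : s * x 7 ^ 2 = 0 := by nlinarith [sq_nonneg (x 5), sq_nonneg (x 6)]
      simpa [hs.ne'] using this
    ext k
    fin_cases k <;> simpa
end
end
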